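/- Let a_n = 2^{−nⁿ·n³} and F = (⋃_{n∈ℕ} [a_{2n}/2, a_{2n}]×{0}) ∪ (⋃_{n∈ℕ} {0}×[a_{2n−1}/2, a_{2n−1}]) ⊂ ℝ². Then sup{κ(x,y,z) : x, y, z ∈ F pairwise distinct} = ∞ (the thickness of F vanishes), and U_p^1(F) = ∞ for every p ∈ [1,∞). -/

import Mathlib

open MeasureTheory Metric Set Filter
open scoped ENNReal Topology Classical

noncomputable section

/-- The affine line through `x` and `y`. -/
def lineThrough {n : ℕ} (x y : EuclideanSpace ℝ (Fin n)) : Set (EuclideanSpace ℝ (Fin n)) :=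
  {p | ∃ t : ℝ, p = x + t • (y - x)}

/-- The inverse circumradius `κ(x,y,z)` of a triple of points, set to `0` when the
points are not pairwise distinct. -/
def kappa {n : ℕ} (x y z : EuclideanSpace ℝ (Fin n)) : ℝ≥0∞ :=
  if x ≠ y ∧ y ≠ z ∧ x ≠ z then
    ENNReal.ofReal (2 * Metric.infDist z (lineThrough x y) / (‖x - z‖ * ‖y - z‖))
  else 0

/-- `κ_G(x) = sup_{v,w ∈ X} κ(x,v,w)`. -/
def kappaG {n : ℕ} (X : Set (EuclideanSpace ℝ (Fin n))) (x : EuclideanSpace ℝ (Fin n)) : ℝ≥0∞ :=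
  ⨆ v ∈ X, ⨆ w ∈ X, kappa x v w

/-- `κ_i(x,y) = sup_{z ∈ X} κ(x,y,z)`. -/
def kappaI {n : ℕ} (X : Set (EuclideanSpace ℝ (Fin n))) (x y : EuclideanSpace ℝ (Fin n)) : ℝ≥0∞ :=
  ⨆ z ∈ X, kappa x y z

/-- The energy `U_p^α(X) = ∫_X κ_G(x)^p dH^α(x)`. -/
def energyU {n : ℕ} (p α : ℝ) (X : Set (EuclideanSpace ℝ (Fin n))) : ℝ≥0∞ :=
  ∫⁻ x in X, kappaG X x ^ p ∂ μH[α]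

/-- The energy `I_p^α(X) = ∫_X ∫_X κ_i(x,y)^p dH^α(x) dH^α(y)`. -/
def energyI {n : ℕ} (p α : ℝ) (X : Set (EuclideanSpace ℝ (Fin n))) : ℝ≥0∞ :=
  ∫⁻ y in X, ∫⁻ x in X, kappaI X x y ^ p ∂ μH[α] ∂ μH[α]

/-- The integral Menger curvature `M_p^α(X)`. -/
def energyM {n : ℕ} (p α : ℝ) (X : Set (EuclideanSpace ℝ (Fin n))) : ℝ≥0∞ :=
  ∫⁻ z in X, ∫⁻ y in X, ∫⁻ x in X, kappa x y z ^ p ∂ μH[α] ∂ μH[α] ∂ μH[α]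

/-- The open double cone about `x` in direction `s` with opening angle `ε`. -/
def cone {n : ℕ} (s : EuclideanSpace ℝ (Fin n)) (ε : ℝ) (x : EuclideanSpace ℝ (Fin n)) :
    Set (EuclideanSpace ℝ (Fin n)) :=
  {y | y ≠ x ∧
    min (InnerProductGeometry.angle (y - x) s) (InnerProductGeometry.angle (y - x) (-s)) < ε}

/-- `X` has an approximate `α`-tangent at `x`. -/
def HasApproxTangent {n : ℕ} (α : ℝ) (X : Set (EuclideanSpace ℝ (Fin n)))
    (x : EuclideanSpace ℝ (Fin n)) : Prop :=
  ∃ s : EuclideanSpace ℝ (Fin n), ‖s‖ = 1 ∧ ∀ ε > (0:ℝ),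
    Filter.Tendsto
      (fun r : ℝ => μH[α] ((X \ cone s ε x) ∩ Metric.closedBall x r) / ENNReal.ofReal (2 * r) ^ α)
      (𝓝[>] 0) (𝓝 0)

/-- `X` has a weak approximate `α`-tangent at `x`. -/
def HasWeakApproxTangent {n : ℕ} (α : ℝ) (X : Set (EuclideanSpace ℝ (Fin n)))
    (x : EuclideanSpace ℝ (Fin n)) : Prop :=
  ∃ ρ > (0:ℝ), ∃ s : ℝ → EuclideanSpace ℝ (Fin n), (∀ r ∈ Set.Ioo (0:ℝ) ρ, ‖s r‖ = 1) ∧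
    ∀ ε > (0:ℝ),
      Filter.Tendsto
        (fun r : ℝ =>
          μH[α] ((X \ cone (s r) ε x) ∩ Metric.closedBall x r) / ENNReal.ofReal (2 * r) ^ α)
        (𝓝[>] 0) (𝓝 0)

/-- Lower `α`-density of `X` at `x`. -/
def lowerDensity {n : ℕ} (α : ℝ) (X : Set (EuclideanSpace ℝ (Fin n)))
    (x : EuclideanSpace ℝ (Fin n)) : ℝ≥0∞ :=
  Filter.liminf
    (fun r : ℝ => μH[α] (X ∩ Metric.closedBall x r) / ENNReal.ofReal (2 * r) ^ α) (𝓝[>] 0)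

/-- Upper `α`-density of `X` at `x`. -/
def upperDensity {n : ℕ} (α : ℝ) (X : Set (EuclideanSpace ℝ (Fin n)))
    (x : EuclideanSpace ℝ (Fin n)) : ℝ≥0∞ :=
  Filter.limsup
    (fun r : ℝ => μH[α] (X ∩ Metric.closedBall x r) / ENNReal.ofReal (2 * r) ^ α) (𝓝[>] 0)


/-- `a_n = 2 ^ (-(n^n * n^3))`. -/
def aseq (n : ℕ) : ℝ := ((2 : ℝ) ^ (n ^ n * n ^ 3))⁻¹

/-- The set `F = (⋃_{n ≥ 1} [a_{2n}/2, a_{2n}] × {0}) ∪ (⋃_{n ≥ 1} {0} × [a_{2n-1}/2, a_{2n-1}])`. -/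
def Fset : Set (EuclideanSpace ℝ (Fin 2)) :=
  {p | ∃ n : ℕ, 1 ≤ n ∧ p 1 = 0 ∧ p 0 ∈ Set.Icc (aseq (2 * n) / 2) (aseq (2 * n))} ∪
  {p | ∃ n : ℕ, 1 ≤ n ∧ p 0 = 0 ∧ p 1 ∈ Set.Icc (aseq (2 * n - 1) / 2) (aseq (2 * n - 1))}

lemma aseq_pos (n : ℕ) : 0 < aseq n := by unfold aseq; positivity

lemma aseq_le_one (n : ℕ) : aseq n ≤ 1 := by
  unfold aseq
  exact inv_le_one_of_one_le₀ (one_le_pow₀ (by norm_num))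

lemma aexp_lt {m n : ℕ} (h : m < n) : m ^ m * m ^ 3 < n ^ n * n ^ 3 := by
  have h1 : m ^ m ≤ n ^ n :=
    (Nat.pow_le_pow_left h.le m).trans (Nat.pow_le_pow_right (by omega) h.le)
  have h2 : m ^ 3 < n ^ 3 := Nat.pow_lt_pow_left h (by norm_num)
  have h3 : 0 < n ^ n := Nat.pow_pos (by omega)
  exact Nat.mul_lt_mul_of_le_of_lt h1 h2 h3

lemma aseq_le_half {m n : ℕ} (h : m < n) : aseq n ≤ aseq m / 2 := by
  have h1 : (2 : ℝ) ^ (m ^ m * m ^ 3 + 1) ≤ 2 ^ (n ^ n * n ^ 3) :=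
    pow_le_pow_right₀ (by norm_num) (aexp_lt h)
  unfold aseq
  rw [div_eq_mul_inv, ← mul_inv, ← pow_succ]
  exact inv_anti₀ (by positivity) h1

lemma aseq_lt_half {m n : ℕ} (h : m + 1 < n) : aseq n < aseq m / 2 := by
  have h1 := aseq_le_half h
  have h2 := aseq_le_half (Nat.lt_succ_self m)
  have h3 := aseq_pos (m + 1)
  simp only [Nat.succ_eq_add_one] at h2
  linarith

lemma aseq_le_inv (n : ℕ) : aseq n ≤ (1 / 2) ^ n := by
  have h1 : n ≤ n ^ n * n ^ 3 := by
    rcases Nat.eq_zero_or_pos n with rfl | hn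
    · simp
    · calc n = 1 * n ^ 1 := by simp
        _ ≤ n ^ n * n ^ 3 := Nat.mul_le_mul (Nat.one_le_pow _ _ hn)
            (Nat.pow_le_pow_right hn (by norm_num))
  unfold aseq
  rw [one_div, inv_pow]
  exact inv_anti₀ (by positivity) (pow_le_pow_right₀ (by norm_num) h1)

/-- The horizontal pieces of `F`. -/
def hseg (n : ℕ) : Set (EuclideanSpace ℝ (Fin 2)) :=
  {p | p 1 = 0 ∧ p 0 ∈ Set.Icc (aseq (2 * n) / 2) (aseq (2 * n))}

lemma hseg_subset {n : ℕ} (hn : 1 ≤ n) : hseg n ⊆ Fset := by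
  intro p hp
  exact Or.inl ⟨n, hn, hp.1, hp.2⟩

lemma hseg_measurable (n : ℕ) : MeasurableSet (hseg n) := by
  apply IsClosed.measurableSet
  have h0 : Continuous (fun p : EuclideanSpace ℝ (Fin 2) => p 0) := by fun_prop
  have h1 : Continuous (fun p : EuclideanSpace ℝ (Fin 2) => p 1) := by fun_prop
  exact (isClosed_eq h1 continuous_const).inter (isClosed_Icc.preimage h0)

lemma hseg_disjoint {m n : ℕ} (h : m < n) : Disjoint (hseg m) (hseg n) := by
  rw [Set.disjoint_left]
  intro p hp hq
  have := aseq_lt_half (m := 2 * m) (n := 2 * n) (by omega)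
  have h1 := hp.2.1
  have h2 := hq.2.2
  linarith

lemma hseg_measure (n : ℕ) : ENNReal.ofReal (aseq (2 * n) / 2) ≤ μH[1] (hseg n) := by
  have hL : LipschitzWith 1 (fun p : EuclideanSpace ℝ (Fin 2) => p 0) := by
    refine LipschitzWith.of_dist_le_mul fun x y => ?_
    rw [NNReal.coe_one, one_mul, dist_eq_norm, dist_eq_norm]
    exact PiLp.norm_apply_le (x - y) 0
  have him : Set.Icc (aseq (2 * n) / 2) (aseq (2 * n)) ⊆
      (fun p : EuclideanSpace ℝ (Fin 2) => p 0) '' hseg n := by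
    intro t ht
    exact ⟨!₂[t, 0], ⟨by simp, by simpa using ht⟩, by simp⟩
  have h := (hL.lipschitzOnWith (s := hseg n)).hausdorffMeasure_image_le (d := 1) (by norm_num)
  have h2 := (measure_mono him).trans h
  rw [MeasureTheory.hausdorffMeasure_real, Real.volume_Icc] at h2
  simp only [ENNReal.coe_one, ENNReal.one_rpow, one_mul] at h2
  refine le_trans (ENNReal.ofReal_le_ofReal ?_) h2
  linarith

lemma kappa_lower {s t b : ℝ} (ht : 0 < t) (htb : t ≤ b) (hbs : b ≤ s) (hts : t < s)
    (x : EuclideanSpace ℝ (Fin 2)) (hx0 : x 0 = s) (hx1 : x 1 = 0) :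
    ENNReal.ofReal (1 / s) ≤ kappa x !₂[t, 0] !₂[0, b] := by
  have hb : 0 < b := ht.trans_le htb
  have hs : 0 < s := hb.trans_le hbs
  unfold kappa
  rw [if_pos]
  · apply ENNReal.ofReal_le_ofReal
    have hd : b ≤ Metric.infDist (!₂[0, b] : EuclideanSpace ℝ (Fin 2))
        (lineThrough x !₂[t, 0]) := by
      have hne : (lineThrough x (!₂[t, 0] : EuclideanSpace ℝ (Fin 2))).Nonempty :=
        ⟨x, 0, by simp⟩
      rw [Metric.le_infDist hne]
      rintro y ⟨r, rfl⟩
      have h := PiLp.norm_apply_le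
        ((!₂[0, b] : EuclideanSpace ℝ (Fin 2)) - (x + r • (!₂[t, 0] - x))) 1
      rw [dist_eq_norm]
      refine le_trans ?_ h
      simp [hx1, le_abs_self]
    have hn1 : ‖x - !₂[0, b]‖ = √(s ^ 2 + b ^ 2) := by
      rw [EuclideanSpace.norm_eq]
      simp [Fin.sum_univ_two, hx0, hx1]
    have hn2 : ‖(!₂[t, 0] : EuclideanSpace ℝ (Fin 2)) - !₂[0, b]‖ = √(t ^ 2 + b ^ 2) := by
      rw [EuclideanSpace.norm_eq]
      simp [Fin.sum_univ_two]
    rw [hn1, hn2, ← Real.sqrt_mul (by positivity)]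
    have hle : √((s ^ 2 + b ^ 2) * (t ^ 2 + b ^ 2)) ≤ 2 * s * b := by
      apply Real.sqrt_le_iff.2 ⟨by positivity, ?_⟩
      have h1 : s ^ 2 + b ^ 2 ≤ 2 * s ^ 2 := by nlinarith
      have h2 : t ^ 2 + b ^ 2 ≤ 2 * b ^ 2 := by nlinarith
      calc (s ^ 2 + b ^ 2) * (t ^ 2 + b ^ 2) ≤ (2 * s ^ 2) * (2 * b ^ 2) :=
            mul_le_mul h1 h2 (by positivity) (by positivity)
        _ = _ := by ring
    have hpos : 0 < √((s ^ 2 + b ^ 2) * (t ^ 2 + b ^ 2)) := by positivity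
    rw [div_le_div_iff₀ hs hpos]
    nlinarith
  · refine ⟨fun h => ?_, fun h => ?_, fun h => ?_⟩
    · have := congrArg (fun p : EuclideanSpace ℝ (Fin 2) => p 0) h
      simp [hx0] at this
      linarith
    · have := congrArg (fun p : EuclideanSpace ℝ (Fin 2) => p 0) h
      simp at this
      linarith
    · have := congrArg (fun p : EuclideanSpace ℝ (Fin 2) => p 0) h
      simp [hx0] at this
      linarith

lemma kappaG_lower {n : ℕ} {x : EuclideanSpace ℝ (Fin 2)} (hx : x ∈ hseg n) :
    ENNReal.ofReal (1 / aseq (2 * n)) ≤ kappaG Fset x := by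
  have hv : (!₂[aseq (2 * n + 2), 0] : EuclideanSpace ℝ (Fin 2)) ∈ Fset := by
    refine Or.inl ⟨n + 1, by omega, by simp, ?_⟩
    have := aseq_pos (2 * n + 2)
    rw [show 2 * (n + 1) = 2 * n + 2 by ring]
    simp only [Set.mem_Icc, PiLp.toLp_apply, Matrix.cons_val_zero]
    constructor <;> linarith
  have hw : (!₂[0, aseq (2 * n + 1)] : EuclideanSpace ℝ (Fin 2)) ∈ Fset := by
    refine Or.inr ⟨n + 1, by omega, by simp, ?_⟩
    have := aseq_pos (2 * n + 1)
    rw [show 2 * (n + 1) - 1 = 2 * n + 1 by omega]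
    simp only [Set.mem_Icc, PiLp.toLp_apply, Matrix.cons_val_one, Matrix.cons_val_fin_one]
    constructor <;> linarith
  have h1 := aseq_le_half (show 2 * n < 2 * n + 1 by omega)
  have h2 := aseq_le_half (show 2 * n + 1 < 2 * n + 2 by omega)
  have p1 := aseq_pos (2 * n + 1)
  have p2 := aseq_pos (2 * n + 2)
  have hl := hx.2.1
  have hu := hx.2.2
  have hk := kappa_lower p2 (b := aseq (2 * n + 1)) (s := x 0) (by linarith) (by linarith)
    (by linarith) x rfl hx.1
  refine le_trans (ENNReal.ofReal_le_ofReal ?_) (hk.trans ?_)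
  · exact one_div_le_one_div_of_le (by linarith) hu
  · exact le_iSup₂_of_le _ hv (le_iSup₂_of_le _ hw le_rfl)

theorem Fset_zero_thickness_and_energyU_infinite :
    (⨆ x ∈ Fset, ⨆ y ∈ Fset, ⨆ z ∈ Fset, kappa x y z) = ⊤ ∧
    ∀ p : ℝ, 1 ≤ p → energyU p 1 Fset = ⊤ := by
  constructor
  · apply ENNReal.eq_top_of_forall_nnreal_le
    intro r
    obtain ⟨k, hk⟩ := pow_unbounded_of_one_lt (r : ℝ) (show (1 : ℝ) < 2 by norm_num)
    set n := k + 1 with hn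
    have hmem : (!₂[aseq (2 * n), 0] : EuclideanSpace ℝ (Fin 2)) ∈ hseg n := by
      have := aseq_pos (2 * n)
      refine ⟨by simp, ?_⟩
      simp only [Set.mem_Icc, PiLp.toLp_apply, Matrix.cons_val_zero]
      constructor <;> linarith
    have hG := kappaG_lower hmem
    refine le_trans ?_ (hG.trans (le_iSup₂_of_le _ (hseg_subset (by omega) hmem) le_rfl))
    rw [← ENNReal.ofReal_coe_nnreal]
    apply ENNReal.ofReal_le_ofReal
    have h1 := aseq_le_inv (2 * n)
    have h2 : (r : ℝ) ≤ 2 ^ (2 * n) :=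
      hk.le.trans (pow_le_pow_right₀ (by norm_num) (by omega))
    refine h2.trans ?_
    rw [le_div_iff₀ (aseq_pos _)]
    calc (2 : ℝ) ^ (2 * n) * aseq (2 * n) ≤ 2 ^ (2 * n) * (1 / 2) ^ (2 * n) := by gcongr
      _ = 1 := by rw [← mul_pow]; norm_num
  · intro p hp
    unfold energyU
    have hsub : (⋃ n : ℕ, hseg (n + 1)) ⊆ Fset :=
      Set.iUnion_subset fun n => hseg_subset (by omega)
    have hdisj : Pairwise (Function.onFun Disjoint fun n : ℕ => hseg (n + 1)) := by
      intro m n hmn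
      rcases lt_or_gt_of_ne hmn with h | h
      · exact hseg_disjoint (by omega)
      · exact (hseg_disjoint (by omega)).symm
    rw [eq_top_iff]
    refine le_trans ?_ (lintegral_mono_set hsub)
    rw [lintegral_iUnion (fun n => hseg_measurable (n + 1)) hdisj]
    have hterm : ∀ n : ℕ, ENNReal.ofReal (1 / 2) ≤
        ∫⁻ x in hseg (n + 1), kappaG Fset x ^ p ∂ μH[1] := by
      intro n
      have ha := aseq_pos (2 * (n + 1))
      have ha1 := aseq_le_one (2 * (n + 1))
      calc ENNReal.ofReal (1 / 2)
          = ENNReal.ofReal (1 / aseq (2 * (n + 1))) * ENNReal.ofReal (aseq (2 * (n + 1)) / 2) := by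
            rw [← ENNReal.ofReal_mul (by positivity)]
            congr 1
            field_simp
        _ ≤ ENNReal.ofReal (1 / aseq (2 * (n + 1))) * μH[1] (hseg (n + 1)) := by
            gcongr
            exact hseg_measure _
        _ = ∫⁻ _ in hseg (n + 1), ENNReal.ofReal (1 / aseq (2 * (n + 1))) ∂ μH[1] := by
            rw [setLIntegral_const]
        _ ≤ _ := by
            refine setLIntegral_mono' (hseg_measurable _) fun x hx => ?_
            have hG := kappaG_lower hx
            have h1 : (1 : ℝ≥0∞) ≤ kappaG Fset x := by
              refine le_trans ?_ hG
              rw [ENNReal.one_le_ofReal]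
              exact (one_le_div ha).2 ha1
            calc _ ≤ kappaG Fset x := hG
              _ = kappaG Fset x ^ (1 : ℝ) := (ENNReal.rpow_one _).symm
              _ ≤ _ := ENNReal.rpow_le_rpow_of_exponent_le h1 hp
    refine le_trans ?_ (ENNReal.tsum_le_tsum hterm)
    rw [ENNReal.tsum_const_eq_top_of_ne_zero (by norm_num)]

end
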